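/- arXiv:math/0410052 — 2 statements merged into one kernel-verified Lean document; each statement's English description precedes it below -/
import Mathlib

section
/- Let S be a Polish space, c : S × S → [0,∞) satisfy condition (★), and (Ω, 𝒜, P) a probability space. Let μ, ν be probability measures on Ω × S whose Ω-margin equals P, with ∫_{Ω×S} c(x, x₀) dμ(ω,x) < ∞ and ∫_{Ω×S} c(x, x₀) dν(ω,x) < ∞ for some x₀ ∈ S, and let ω ↦ μ_ω, ω ↦ ν_ω be disintegrations (measurable kernels) of μ and ν with respect to P. Let ω ↦ λ_ω be an 𝒜*-measurable selection of optimal couplings, i.e. λ_ω has margins μ_ω, ν_ω and ∫ c dλ_ω = KR_c(μ_ω, ν_ω) for each ω, and let λ be the probability on Ω × S × S defined by λ(A × B × C) = ∫_A λ_ω(B × C) dP(ω). Then KR^par_c(μ,ν) = ∫_{Ω×S×S} c(x,y) dλ(ω,x,y) = ℓ^par_c(μ,ν); in particular λ has margins μ and ν (in the parametrized sense) and the infimum defining KR^par_c(μ,ν) is attained at λ. -/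
open MeasureTheory ProbabilityTheory ENNReal Set

noncomputable section

/-- The `μ`-completion of the σ-algebra `m`. -/
def muCompletion {α : Type*} (m : MeasurableSpace α) (μ : @Measure α m) : MeasurableSpace α :=
  letI := m
  inferInstanceAs (MeasurableSpace (MeasureTheory.NullMeasurableSpace α μ))

/-- The universal completion of a σ-algebra: the intersection of the `μ`-completions
over all finite nonnegative measures `μ`. -/
def univCompletion {α : Type*} (m : MeasurableSpace α) : MeasurableSpace α :=
  ⨅ (μ : @Measure α m) (_ : @IsFiniteMeasure α m μ), muCompletion m μ

/-- `Lip_c`: bounded continuous functions `u : S → ℝ` with `|u x - u y| ≤ c x y`. -/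
def LipC {S : Type*} [TopologicalSpace S] (c : S → S → ℝ) : Set (S → ℝ) :=
  {u | Continuous u ∧ (∃ M, ∀ x, |u x| ≤ M) ∧ ∀ x y, |u x - u y| ≤ c x y}

/-- Condition (★): `c x y = sup_{u ∈ Lip_c} |u x - u y|` for all `x, y`. -/
def StarCond {S : Type*} [TopologicalSpace S] (c : S → S → ℝ) : Prop :=
  ∀ x y, c x y = sSup {r : ℝ | ∃ u ∈ LipC c, r = |u x - u y|}

/-- `D(μ,ν)`: couplings of `μ` and `ν`, i.e. probability measures on `S × S`
with first margin `μ` and second margin `ν`. -/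
def Couplings {S : Type*} [MeasurableSpace S] (μ ν : Measure S) : Set (Measure (S × S)) :=
  {π | IsProbabilityMeasure π ∧ π.map Prod.fst = μ ∧ π.map Prod.snd = ν}

/-- The Kantorovich–Rubinštein functional `KR_c(μ,ν)`. -/
def KR {S : Type*} [MeasurableSpace S] (c : S → S → ℝ) (μ ν : Measure S) : ℝ≥0∞ :=
  ⨅ π ∈ Couplings μ ν, ∫⁻ p, ENNReal.ofReal (c p.1 p.2) ∂π

/-- The dual functional `ℓ_c(μ,ν) = sup_{f ∈ Lip_c} |∫ f dμ - ∫ f dν|`. -/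
def lipDist {S : Type*} [TopologicalSpace S] [MeasurableSpace S] (c : S → S → ℝ)
    (μ ν : Measure S) : ℝ≥0∞ :=
  ⨆ u ∈ LipC c, ENNReal.ofReal |∫ x, u x ∂μ - ∫ x, u x ∂ν|

/-- `D^par(μ,ν)`: probability measures on `Ω × S × S` with `π(·×·×S) = μ` and
`π(·×S×·) = ν`. -/
def ParamCouplings {Ω S : Type*} [MeasurableSpace Ω] [MeasurableSpace S]
    (μ ν : Measure (Ω × S)) : Set (Measure (Ω × S × S)) :=
  {π | IsProbabilityMeasure π ∧ π.map (fun p => (p.1, p.2.1)) = μ ∧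
    π.map (fun p => (p.1, p.2.2)) = ν}

/-- The parametrized Kantorovich–Rubinštein functional `KR^par_c(μ,ν)`. -/
def paramKR {Ω S : Type*} [MeasurableSpace Ω] [MeasurableSpace S]
    (c : S → S → ℝ) (μ ν : Measure (Ω × S)) : ℝ≥0∞ :=
  ⨅ π ∈ ParamCouplings μ ν, ∫⁻ p, ENNReal.ofReal (c p.2.1 p.2.2) ∂π

/-- The parametrized dual functional `ℓ^par_c(μ,ν)`, the supremum of `μ(f) - ν(f)`
over measurable integrands `f` with `f(ω,·) ∈ Lip_c` for every `ω`. -/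
def paramLipDist {Ω S : Type*} [MeasurableSpace Ω] [TopologicalSpace S] [MeasurableSpace S]
    (c : S → S → ℝ) (μ ν : Measure (Ω × S)) : ℝ≥0∞ :=
  ⨆ f ∈ {f : Ω × S → ℝ | Measurable f ∧ ∀ ω, (fun x => f (ω, x)) ∈ LipC c},
    ENNReal.ofReal (∫ p, f p ∂μ - ∫ p, f p ∂ν)

/-- `ω ↦ κ ω` is a disintegration of the measure `μ` on `Ω × S` with respect to `P`. -/
def IsDisintegration {Ω S : Type*} [MeasurableSpace Ω] [MeasurableSpace S]
    (P : Measure Ω) (μ : Measure (Ω × S)) (κ : Ω → Measure S) : Prop :=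
  (∀ ω, IsProbabilityMeasure (κ ω)) ∧
  (∀ B : Set S, MeasurableSet B → Measurable (fun ω => κ ω B)) ∧
  (∀ f : Ω × S → ℝ≥0∞, Measurable f →
    ∫⁻ p, f p ∂μ = ∫⁻ ω, ∫⁻ x, f (ω, x) ∂(κ ω) ∂P)

/-
Weak duality is immediate. For strong duality, `c` is, by the Lindelöf property, the supremum of
countably many `|u_i x - u_i y|` with `u_i ∈ Lip_c`, hence the increasing limit of the pseudometrics
`max_{i < N} |u_i x - u_i y|`. The `u_i` map `S` into a compact cube, where the Riesz extension
theorem yields, for two given margins, one coupling that is good for all these pseudometrics at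
once. Lifting it back to `S`, and using that the continuous functions on the cube form a separable
space, gives `KR_c(m, n) ≤ sup_k (m(f_k) - n(f_k))` for a countable family of `f_k ∈ Lip_c`, the
same for all margins. Countability allows a measurable choice of the best `f_k` in each fibre, so
`∫ KR_c(μ_ω, ν_ω) dP(ω) ≤ ℓ^par_c(μ, ν)`.
-/

section Kernels

theorem map_fst_parallelComp_comp {α β γ δ : Type*} [MeasurableSpace α] [MeasurableSpace β]
    [MeasurableSpace γ] [MeasurableSpace δ] {K : Kernel α β} [IsSFiniteKernel K] {K' : Kernel γ δ}
    [IsMarkovKernel K'] (ρ : Measure (α × γ)) :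
    ((K ∥ₖ K') ∘ₘ ρ).map Prod.fst = K ∘ₘ ρ.map Prod.fst := by
  rw [Measure.map_comp _ _ measurable_fst, ← Measure.deterministic_comp_eq_map measurable_fst,
    Measure.comp_assoc]
  refine Measure.comp_congr (.of_forall fun p => ?_)
  rw [Kernel.map_apply _ measurable_fst, Kernel.parallelComp_apply,
    Kernel.comp_deterministic_eq_comap, Kernel.comap_apply]
  exact Measure.fst_prod

theorem map_snd_parallelComp_comp {α β γ δ : Type*} [MeasurableSpace α] [MeasurableSpace β]
    [MeasurableSpace γ] [MeasurableSpace δ] {K : Kernel α β} [IsMarkovKernel K] {K' : Kernel γ δ}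
    [IsSFiniteKernel K'] (ρ : Measure (α × γ)) :
    ((K ∥ₖ K') ∘ₘ ρ).map Prod.snd = K' ∘ₘ ρ.map Prod.snd := by
  rw [Measure.map_comp _ _ measurable_snd, ← Measure.deterministic_comp_eq_map measurable_snd,
    Measure.comp_assoc]
  refine Measure.comp_congr (.of_forall fun p => ?_)
  rw [Kernel.map_apply _ measurable_snd, Kernel.parallelComp_apply,
    Kernel.comp_deterministic_eq_comap, Kernel.comap_apply]
  exact Measure.snd_prod

variable {S E : Type*} [MeasurableSpace S] [StandardBorelSpace S]
  [MeasurableSpace E] [StandardBorelSpace E]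

theorem condDistrib_id_map_ae_eq_dirac [Nonempty S] [Nonempty E] (m : Measure S) [IsFiniteMeasure m]
    {U : S → E} (hU : Measurable U) :
    ∀ᵐ z ∂m.map U, (condDistrib id U m z).map U = Measure.dirac z := by
  filter_upwards [condDistrib_comp U aemeasurable_id hU, condDistrib_self U] with z hcomp hself
  rw [← Kernel.map_apply _ hU, ← hcomp, Function.comp_id, hself, Kernel.id_apply]

/-- The lift draws the two points of `S` independently given their images under `U`. -/
theorem Couplings.exists_map_eq {m n : Measure S} [IsProbabilityMeasure m] [IsProbabilityMeasure n]
    {U : S → E} (hU : Measurable U) {γ : Measure (E × E)}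
    (hγ : γ ∈ Couplings (m.map U) (n.map U)) :
    ∃ π ∈ Couplings m n, π.map (Prod.map U U) = γ := by
  have : Nonempty S := nonempty_of_isProbabilityMeasure m
  have : Nonempty E := this.map U
  obtain ⟨_, hfst, hsnd⟩ := hγ
  set K := condDistrib id U m
  set K' := condDistrib id U n
  refine ⟨(K ∥ₖ K') ∘ₘ γ, ⟨inferInstance, ?_, ?_⟩, ?_⟩
  · rw [map_fst_parallelComp_comp, hfst, condDistrib_comp_map hU.aemeasurable aemeasurable_id,
      Measure.map_id]
  · rw [map_snd_parallelComp_comp, hsnd, condDistrib_comp_map hU.aemeasurable aemeasurable_id,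
      Measure.map_id]
  · have hK : ∀ᵐ p ∂γ, (K p.1).map U = Measure.dirac p.1 :=
      ae_of_ae_map measurable_fst.aemeasurable (hfst ▸ condDistrib_id_map_ae_eq_dirac m hU)
    have hK' : ∀ᵐ p ∂γ, (K' p.2).map U = Measure.dirac p.2 :=
      ae_of_ae_map measurable_snd.aemeasurable (hsnd ▸ condDistrib_id_map_ae_eq_dirac n hU)
    rw [Measure.map_comp _ _ (hU.prodMap hU)]
    refine (Measure.comp_congr ?_).trans Measure.id_comp
    filter_upwards [hK, hK'] with p hp hp'
    rw [Kernel.map_apply _ (hU.prodMap hU), Kernel.parallelComp_apply,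
      ← Measure.map_prod_map _ _ hU hU, hp, hp', Measure.dirac_prod_dirac, Kernel.id_apply]

end Kernels

theorem exists_nonneg_extension_along {W F : Type*} [AddCommGroup W] [Module ℝ W]
    [AddCommGroup F] [Module ℝ F] (L : W →ₗ[ℝ] F) (ℓ : W →ₗ[ℝ] ℝ) (C : PointedCone ℝ F)
    (hℓ : ∀ w, L w ∈ C → 0 ≤ ℓ w) (hL : ∀ h, ∃ w, L w + h ∈ C) :
    ∃ Λ : F →ₗ[ℝ] ℝ, (∀ w, Λ (L w) = ℓ w) ∧ ∀ h ∈ C, 0 ≤ Λ h := by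
  let C' : PointedCone ℝ (W × F) := C.comap (L.coprod LinearMap.id)
  let f : W × F →ₗ.[ℝ] ℝ :=
    ⟨LinearMap.ker (LinearMap.snd ℝ W F), ℓ ∘ₗ LinearMap.fst ℝ W F ∘ₗ Submodule.subtype _⟩
  have mem_C' : ∀ w h, (w, h) ∈ C' ↔ L w + h ∈ C := fun w h => by
    rw [PointedCone.mem_comap, LinearMap.coprod_apply, LinearMap.id_apply]
  obtain ⟨g, hgf, hgC⟩ := riesz_extension C' f
    (by
      rintro ⟨⟨w, h⟩, rfl : h = 0⟩ hw
      exact hℓ w (by simpa only [mem_C', add_zero] using hw))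
    (by
      rintro ⟨w, h⟩
      obtain ⟨w', hw'⟩ := hL h
      refine ⟨⟨(w' - w, 0), rfl⟩, ?_⟩
      rwa [Prod.mk_add_mk, sub_add_cancel, zero_add, mem_C'])
  have hg_inl : ∀ w, g (w, 0) = ℓ w := fun w => hgf ⟨(w, 0), rfl⟩
  have hg_graph : ∀ w, 0 ≤ g (w, -L w) := fun w =>
    hgC _ ((mem_C' _ _).2 (by rw [add_neg_cancel]; exact C.zero_mem))
  have hg_split : ∀ w h, g (w, h) = ℓ w + g (0, h) := fun w h => by
    rw [← hg_inl, ← map_add, Prod.mk_add_mk, add_zero, zero_add]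
  refine ⟨g ∘ₗ LinearMap.inr ℝ W F, fun w => le_antisymm ?_ ?_, fun h hh =>
    hgC (0, h) ((mem_C' _ _).2 (by rwa [map_zero, zero_add]))⟩
  · have h := hg_graph w
    rw [hg_split, ← LinearMap.inr_apply (R := ℝ) (M := W), map_neg, map_neg] at h
    exact le_of_sub_nonneg (by simpa [sub_eq_add_neg] using h)
  · have h := hg_graph (-w)
    rw [hg_split, map_neg, map_neg, neg_neg] at h
    rw [LinearMap.comp_apply, LinearMap.inr_apply]
    linarith

theorem exists_measure_of_nonneg_linearMap {X : Type*} [TopologicalSpace X] [CompactSpace X]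
    [T2Space X] [MeasurableSpace X] [BorelSpace X] (Λ : C(X, ℝ) →ₗ[ℝ] ℝ)
    (hΛ : ∀ h, 0 ≤ h → 0 ≤ Λ h) :
    ∃ π : Measure X, IsFiniteMeasure π ∧ ∀ h : C(X, ℝ), ∫ x, h x ∂π = Λ h := by
  let Λ₀ : CompactlySupportedContinuousMap X ℝ →ₗ[ℝ] ℝ :=
    { toFun := fun h => Λ h
      map_add' := fun g h => map_add Λ (g : C(X, ℝ)) h
      map_smul' := fun a h => map_smul Λ a (h : C(X, ℝ)) }
  let Λc : CompactlySupportedContinuousMap X ℝ →ₚ[ℝ] ℝ :=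
    PositiveLinearMap.mk₀ Λ₀ fun h hh => hΛ h hh
  exact ⟨RealRMK.rieszMeasure Λc, inferInstance, fun h =>
    RealRMK.integral_rieszMeasure Λc (CompactlySupportedContinuousMap.continuousMapEquiv h)⟩

theorem integrable_continuousMap {X : Type*} [TopologicalSpace X] [CompactSpace X]
    [MeasurableSpace X] [OpensMeasurableSpace X] {m : Measure X} [IsFiniteMeasure m]
    (f : C(X, ℝ)) : Integrable f m :=
  f.continuous.integrable_of_hasCompactSupport (.of_compactSpace f)

section CompactDuality

variable {E : Type*} [TopologicalSpace E] [CompactSpace E] [MeasurableSpace E] [BorelSpace E]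

/-- Integration against `m`, as a linear functional on continuous functions: the prescribed margin
in the Riesz extension argument. -/
def integralLinearMap (m : Measure E) [IsFiniteMeasure m] : C(E, ℝ) →ₗ[ℝ] ℝ where
  toFun φ := ∫ x, φ x ∂m
  map_add' φ ψ := integral_add (integrable_continuousMap φ) (integrable_continuousMap ψ)
  map_smul' a φ := integral_const_mul a φ

/-- The direct sum `(φ ⊕ ψ)(x, y) = φ x + ψ y` of two potentials, linear in `(φ, ψ)`. -/
def potentialSum (E : Type*) [TopologicalSpace E] : C(E, ℝ) × C(E, ℝ) →ₗ[ℝ] C(E × E, ℝ) :=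
  (ContinuousMap.compRightAlgHom ℝ ℝ ContinuousMap.fst).toLinearMap.coprod
    (ContinuousMap.compRightAlgHom ℝ ℝ ContinuousMap.snd).toLinearMap

theorem potentialSum_apply {E : Type*} [TopologicalSpace E] (φ ψ : C(E, ℝ)) (p : E × E) :
    potentialSum E (φ, ψ) p = φ p.1 + ψ p.2 := rfl

/-- The cone of continuous functions lying above a nonnegative multiple of some `T - d i`. A linear
functional that is nonnegative on it is positive and, if normalized, at most `T` at every `d i`. -/
def slackCone {X ι : Type*} [TopologicalSpace X] [Nonempty ι] {d : ι → C(X, ℝ)}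
    (hd : Directed (· ≤ ·) d) (T : ℝ) : PointedCone ℝ C(X, ℝ) where
  carrier := {h | ∃ i, ∃ t, 0 ≤ t ∧ ∀ p, t * (T - d i p) ≤ h p}
  zero_mem' := ⟨Classical.arbitrary ι, 0, le_rfl, fun p => (zero_mul _).le⟩
  add_mem' := by
    rintro g h ⟨i, s, hs, hg⟩ ⟨j, t, ht, hh⟩
    obtain ⟨k, hik, hjk⟩ := hd i j
    refine ⟨k, s + t, add_nonneg hs ht, fun p => ?_⟩
    calc (s + t) * (T - d k p) = s * (T - d k p) + t * (T - d k p) := add_mul _ _ _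
      _ ≤ s * (T - d i p) + t * (T - d j p) := by gcongr; exacts [hik p, hjk p]
      _ ≤ g p + h p := add_le_add (hg p) (hh p)
  smul_mem' := by
    rintro ⟨a, ha⟩ h ⟨i, t, ht, hh⟩
    refine ⟨i, a * t, mul_nonneg ha ht, fun p => ?_⟩
    calc a * t * (T - d i p) = a * (t * (T - d i p)) := mul_assoc _ _ _
      _ ≤ a * h p := mul_le_mul_of_nonneg_left (hh p) ha

variable [SecondCountableTopology E]
  {m n : Measure E} [IsProbabilityMeasure m] [IsProbabilityMeasure n]

theorem integral_add_integral_nonneg {φ ψ : C(E, ℝ)} (h : ∀ x y, 0 ≤ φ x + ψ y) :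
    0 ≤ ∫ x, φ x ∂m + ∫ y, ψ y ∂n := by
  calc 0 ≤ ∫ p, (φ p.1 + ψ p.2) ∂m.prod n := integral_nonneg fun p => h p.1 p.2
    _ = ∫ p, φ p.1 ∂m.prod n + ∫ p, ψ p.2 ∂m.prod n :=
      integral_add (integrable_continuousMap (φ.comp .fst)) (integrable_continuousMap (ψ.comp .snd))
    _ = ∫ x, φ x ∂m + ∫ y, ψ y ∂n := by
      simp only [integral_fun_fst, integral_fun_snd, probReal_univ, one_smul]

theorem integral_add_integral_nonneg_of_mem_slackCone {ι : Type*} [Nonempty ι]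
    {d : ι → C(E × E, ℝ)} (hd : Directed (· ≤ ·) d) {T : ℝ}
    (h : ∀ i, ∀ φ ψ : C(E, ℝ), (∀ x y, φ x + ψ y ≤ d i (x, y)) →
      ∫ x, φ x ∂m + ∫ y, ψ y ∂n ≤ T)
    {φ ψ : C(E, ℝ)} (hφψ : potentialSum E (φ, ψ) ∈ slackCone hd T) :
    0 ≤ ∫ x, φ x ∂m + ∫ y, ψ y ∂n := by
  obtain ⟨i, t, ht, hslack⟩ := hφψ
  obtain rfl | ht := ht.eq_or_lt
  · exact integral_add_integral_nonneg fun x y => (zero_mul _).symm.trans_le (hslack (x, y))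
  · have hle := h i (.const E T - t⁻¹ • φ) (-(t⁻¹ • ψ)) fun x y => by
      have := (le_inv_mul_iff₀ ht).2 (hslack (x, y))
      rw [potentialSum_apply, mul_add] at this
      simp only [ContinuousMap.sub_apply, ContinuousMap.const_apply, ContinuousMap.smul_apply,
        ContinuousMap.neg_apply, smul_eq_mul]
      linarith
    have hφ : ∫ x, (ContinuousMap.const E T - t⁻¹ • φ) x ∂m = T - t⁻¹ * ∫ x, φ x ∂m := by
      simp only [ContinuousMap.sub_apply, ContinuousMap.const_apply, ContinuousMap.smul_apply,
        smul_eq_mul]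
      rw [integral_sub (integrable_const T) ((integrable_continuousMap φ).const_mul _),
        integral_const, probReal_univ, one_smul, integral_const_mul]
    have hψ : ∫ y, (-(t⁻¹ • ψ)) y ∂n = -(t⁻¹ * ∫ y, ψ y ∂n) := by
      simp only [ContinuousMap.neg_apply, ContinuousMap.smul_apply, smul_eq_mul, integral_neg,
        integral_const_mul]
    rw [hφ, hψ] at hle
    exact (mul_nonneg_iff_of_pos_left (inv_pos.2 ht)).1 (by linarith)

variable [T2Space E]

theorem Couplings.mem_of_integral_eq {π : Measure (E × E)} [IsFiniteMeasure π]
    (hπ : ∀ φ ψ : C(E, ℝ), ∫ p, potentialSum E (φ, ψ) p ∂π = ∫ x, φ x ∂m + ∫ y, ψ y ∂n) :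
    π ∈ Couplings m n := by
  have hfst : π.map Prod.fst = m := by
    refine ext_of_forall_integral_eq_of_IsFiniteMeasure fun φ => ?_
    rw [integral_map measurable_fst.aemeasurable φ.continuous.aestronglyMeasurable]
    simpa [potentialSum_apply] using hπ φ.toContinuousMap 0
  have hsnd : π.map Prod.snd = n := by
    refine ext_of_forall_integral_eq_of_IsFiniteMeasure fun ψ => ?_
    rw [integral_map measurable_snd.aemeasurable ψ.continuous.aestronglyMeasurable]
    simpa [potentialSum_apply] using hπ 0 ψ.toContinuousMap
  refine ⟨(Measure.isProbabilityMeasure_map_iff measurable_fst.aemeasurable).1 ?_, hfst, hsnd⟩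
  rwa [hfst]

theorem exists_coupling_of_potentials {ι : Type*} [Nonempty ι] {d : ι → C(E × E, ℝ)}
    (hd : Directed (· ≤ ·) d) {T : ℝ}
    (h : ∀ i, ∀ φ ψ : C(E, ℝ), (∀ x y, φ x + ψ y ≤ d i (x, y)) →
      ∫ x, φ x ∂m + ∫ y, ψ y ∂n ≤ T) :
    ∃ π ∈ Couplings m n, ∀ i, ∫ p, d i p ∂π ≤ T := by
  let ℓ := (integralLinearMap m).coprod (integralLinearMap n)
  obtain ⟨Λ, hΛℓ, hΛ⟩ := exists_nonneg_extension_along (potentialSum E) ℓ (slackCone hd T)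
    (fun _ hw => integral_add_integral_nonneg_of_mem_slackCone hd h hw)
    fun h => ⟨(.const E ‖h‖, 0), Classical.arbitrary ι, 0, le_rfl, fun p => by
      have := (abs_le.1 (h.norm_coe_le_norm p)).1
      rw [zero_mul, ContinuousMap.add_apply, potentialSum_apply]
      simp only [ContinuousMap.const_apply, ContinuousMap.zero_apply]
      linarith⟩
  obtain ⟨π, _, hπ⟩ := exists_measure_of_nonneg_linearMap Λ fun h hh =>
    hΛ h ⟨Classical.arbitrary ι, 0, le_rfl, fun p => (zero_mul _).trans_le (hh p)⟩
  have hcpl : π ∈ Couplings m n := Couplings.mem_of_integral_eq fun φ ψ => by rw [hπ, hΛℓ]; rfl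
  refine ⟨π, hcpl, fun i => ?_⟩
  have := hcpl.1
  have hslack : 0 ≤ Λ (.const _ T - d i) := hΛ _ ⟨i, 1, zero_le_one, fun p => (one_mul _).le⟩
  rw [← hπ] at hslack
  simp only [ContinuousMap.sub_apply, ContinuousMap.const_apply] at hslack
  rwa [integral_sub (integrable_const T) (integrable_continuousMap (d i)), integral_const,
    probReal_univ, one_smul, sub_nonneg] at hslack

theorem exists_lipC_between_potentials {X M : Type*} [TopologicalSpace X] [CompactSpace X]
    [PseudoMetricSpace M] {v : X → M} (hv : Continuous v) {φ ψ : C(X, ℝ)}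
    (h : ∀ x y, φ x + ψ y ≤ dist (v x) (v y)) :
    ∃ u ∈ LipC fun x y => dist (v x) (v y), (∀ x, φ x ≤ u x) ∧ ∀ x, u x ≤ -ψ x := by
  rcases isEmpty_or_nonempty X with _ | _
  · exact ⟨φ, ⟨φ.continuous, ⟨0, isEmptyElim⟩, isEmptyElim⟩, isEmptyElim, isEmptyElim⟩
  let g : M → ℝ := fun a => ⨅ z, (dist a (v z) - ψ z)
  have hbdd : ∀ a, BddBelow (range fun z => dist a (v z) - ψ z) := fun a =>
    ⟨-‖ψ‖, by
      rintro _ ⟨z, rfl⟩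
      linarith [dist_nonneg (x := a) (y := v z), (abs_le.1 (ψ.norm_coe_le_norm z)).2]⟩
  have hg : LipschitzWith 1 g := LipschitzWith.of_le_add fun a b => by
    rw [← sub_le_iff_le_add]
    refine le_ciInf fun z => ?_
    linarith [ciInf_le (hbdd a) z, dist_triangle a b (v z)]
  have hu : Continuous (g ∘ v) := hg.continuous.comp hv
  refine ⟨g ∘ v, ⟨hu, ?_, fun x y => by simpa [Real.dist_eq] using hg.dist_le_mul (v x) (v y)⟩,
    fun x => le_ciInf fun z => le_sub_iff_add_le.2 (h x z), fun x => ?_⟩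
  · exact ⟨‖ContinuousMap.mk _ hu‖, fun x => ContinuousMap.norm_coe_le_norm ⟨_, hu⟩ x⟩
  · simpa using ciInf_le (hbdd (v x)) x

/-- The pseudometric `max_{i < N} |v i x - v i y|`, pulled back from the sup metric on `Fin N → ℝ`.
As `N` grows these approximate a cost satisfying condition (★) from below. -/
def prefixDist {X : Type*} (v : ℕ → X → ℝ) (N : ℕ) (x y : X) : ℝ :=
  dist (fun i : Fin N => v i x) fun i : Fin N => v i y

theorem prefixDist_le_iff {X : Type*} {v : ℕ → X → ℝ} {N : ℕ} {x y : X} {r : ℝ} (hr : 0 ≤ r) :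
    prefixDist v N x y ≤ r ↔ ∀ i < N, |v i x - v i y| ≤ r := by
  rw [prefixDist, dist_pi_le_iff hr]
  exact ⟨fun h i hi => h ⟨i, hi⟩, fun h i => h i i.2⟩

theorem prefixDist_mono {X : Type*} (v : ℕ → X → ℝ) (x y : X) :
    Monotone fun N => prefixDist v N x y := fun _ _ hN =>
  (prefixDist_le_iff dist_nonneg).2 fun i hi =>
    (prefixDist_le_iff dist_nonneg).1 le_rfl i (hi.trans_le hN)

theorem continuous_prefixDist {X : Type*} [TopologicalSpace X] {v : ℕ → X → ℝ}
    (hv : ∀ i, Continuous (v i)) (N : ℕ) : Continuous fun p : X × X => prefixDist v N p.1 p.2 := by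
  unfold prefixDist
  fun_prop

theorem exists_coupling_prefixDist {v : ℕ → E → ℝ} (hv : ∀ i, Continuous (v i)) {T : ℝ}
    (h : ∀ N, ∀ u ∈ LipC (prefixDist v N), ∫ x, u x ∂m - ∫ x, u x ∂n ≤ T) :
    ∃ π ∈ Couplings m n, ∀ N, ∫ p, prefixDist v N p.1 p.2 ∂π ≤ T := by
  let d : ℕ → C(E × E, ℝ) := fun N => ⟨_, continuous_prefixDist hv N⟩
  have hd : Monotone d := fun _ _ hN p => prefixDist_mono v p.1 p.2 hN
  refine exists_coupling_of_potentials hd.directed_le fun N φ ψ hφψ => ?_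
  obtain ⟨u, hu, hφ, hψ⟩ := exists_lipC_between_potentials
    (v := fun x (i : Fin N) => v i x) (by fun_prop) hφψ
  have hφu : ∫ x, φ x ∂m ≤ ∫ x, u x ∂m :=
    integral_mono (integrable_continuousMap φ) (integrable_continuousMap ⟨u, hu.1⟩) hφ
  have hψu : ∫ x, u x ∂n ≤ ∫ x, -ψ x ∂n :=
    integral_mono (integrable_continuousMap ⟨u, hu.1⟩) (integrable_continuousMap (-ψ)) hψ
  rw [integral_neg] at hψu
  linarith [h N u hu]

end CompactDuality

section StarCond

variable {S : Type*} [TopologicalSpace S] {c : S → S → ℝ}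

theorem StarCond.nonneg (hc : StarCond c) (x y : S) : 0 ≤ c x y := by
  rw [hc x y]
  exact Real.sSup_nonneg (by rintro _ ⟨u, -, rfl⟩; exact abs_nonneg _)

theorem zero_mem_lipC (hc : ∀ x y, 0 ≤ c x y) : 0 ∈ LipC c :=
  ⟨continuous_const, ⟨0, fun _ => by simp⟩, fun x y => by simpa using hc x y⟩

theorem StarCond.exists_lt_abs_sub (hc : StarCond c) {x y : S} {r : ℝ} (hr : r < c x y) :
    ∃ u ∈ LipC c, r < |u x - u y| := by
  rw [hc x y] at hr
  obtain ⟨_, ⟨u, hu, rfl⟩, hru⟩ := exists_lt_of_lt_csSup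
    (s := {r : ℝ | ∃ u ∈ LipC c, r = |u x - u y|}) ⟨_, 0, zero_mem_lipC hc.nonneg, rfl⟩ hr
  exact ⟨u, hu, hru⟩

/-- By the Lindelöf property, countably many of the open sets `{(x, y, r) | r < |u x - u y|}`,
`u ∈ LipC c`, cover the strict hypograph of `c`. -/
theorem StarCond.exists_seq_lt_abs_sub [SecondCountableTopology S] (hc : StarCond c) :
    ∃ u : ℕ → S → ℝ, (∀ n, u n ∈ LipC c) ∧ ∀ x y, ∀ r < c x y, ∃ n, r < |u n x - u n y| := by
  obtain ⟨D, hDsub, hD, hcover⟩ := TopologicalSpace.isOpen_biUnion_countable (LipC c)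
    (fun u => {p : S × S × ℝ | p.2.2 < |u p.1 - u p.2.1|}) fun u hu => by
      have := hu.1
      exact isOpen_lt (by fun_prop) (by fun_prop)
  obtain ⟨u, hu⟩ := (hD.insert 0).exists_eq_range (insert_nonempty 0 D)
  refine ⟨u, fun n => ?_, fun x y r hr => ?_⟩
  · exact insert_subset (zero_mem_lipC hc.nonneg) hDsub (hu ▸ mem_range_self n)
  · obtain ⟨w, hw, hrw⟩ := hc.exists_lt_abs_sub hr
    have hmem : (x, y, r) ∈ ⋃ u ∈ LipC c, {p : S × S × ℝ | p.2.2 < |u p.1 - u p.2.1|} :=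
      mem_biUnion hw hrw
    rw [← hcover] at hmem
    obtain ⟨w', hw', hrw'⟩ := mem_iUnion₂.1 hmem
    obtain ⟨n, rfl⟩ : w' ∈ range u := hu ▸ mem_insert_of_mem 0 hw'
    exact ⟨n, hrw'⟩

theorem StarCond.exists_seq_ofReal_eq_iSup_prefixDist [SecondCountableTopology S]
    (hc : StarCond c) :
    ∃ u : ℕ → S → ℝ, (∀ n, u n ∈ LipC c) ∧
      ∀ x y, ENNReal.ofReal (c x y) = ⨆ N, ENNReal.ofReal (prefixDist u N x y) := by
  obtain ⟨u, hu, hlt⟩ := hc.exists_seq_lt_abs_sub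
  refine ⟨u, hu, fun x y => le_antisymm ?_ (iSup_le fun N => ENNReal.ofReal_le_ofReal ?_)⟩
  · refine le_of_forall_lt fun a ha => ?_
    obtain ⟨n, hn⟩ := hlt x y a.toReal ((ENNReal.lt_ofReal_iff_toReal_lt ha.ne_top).1 ha)
    refine lt_iSup_iff.2 ⟨n + 1, (ENNReal.lt_ofReal_iff_toReal_lt ha.ne_top).2 ?_⟩
    exact hn.trans_le ((prefixDist_le_iff dist_nonneg).1 le_rfl n n.lt_succ_self)
  · exact (prefixDist_le_iff (hc.nonneg x y)).2 fun i _ => (hu i).2.2 x y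

theorem StarCond.measurable_ofReal [SecondCountableTopology S] [MeasurableSpace S] [BorelSpace S]
    (hc : StarCond c) : Measurable fun p : S × S => ENNReal.ofReal (c p.1 p.2) := by
  obtain ⟨u, hu, hcu⟩ := hc.exists_seq_ofReal_eq_iSup_prefixDist
  simp only [hcu]
  exact .iSup fun N => (continuous_prefixDist (fun i => (hu i).1) N).measurable.ennreal_ofReal

end StarCond

section CountableDuality

theorem continuous_integral_continuousMap {X : Type*} [TopologicalSpace X] [CompactSpace X]
    [SecondCountableTopologyEither X ℝ] [MeasurableSpace X] [BorelSpace X]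
    (m : Measure X) [IsFiniteMeasure m] :
    Continuous fun f : C(X, ℝ) => ∫ x, f x ∂m := by
  have heq : (fun f : C(X, ℝ) => ∫ x, f x ∂m) = fun f => ∫ x, ContinuousMap.toLp 1 m ℝ f x ∂m :=
    funext fun f => integral_congr_ae (ContinuousMap.coeFn_toLp m f).symm
  rw [heq]
  exact continuous_integral.comp (ContinuousMap.toLp 1 m ℝ).continuous

variable {E : Type*} [TopologicalSpace E] [CompactSpace E] [PolishSpace E]
  [MeasurableSpace E] [BorelSpace E]

theorem exists_countable_subset_integral_sub_le (A : Set C(E, ℝ)) :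
    ∃ D ⊆ A, D.Countable ∧ ∀ (m n : Measure E) [IsFiniteMeasure m] [IsFiniteMeasure n] (T : ℝ),
      (∀ f ∈ D, ∫ x, f x ∂m - ∫ x, f x ∂n ≤ T) → ∀ f ∈ A, ∫ x, f x ∂m - ∫ x, f x ∂n ≤ T := by
  obtain ⟨D, hDA, hD, hdense⟩ := TopologicalSpace.IsSeparable.of_separableSpace A
    |>.exists_countable_dense_subset
  refine ⟨D, hDA, hD, fun m n _ _ T hT f hf => ?_⟩
  have hclosed : IsClosed {f : C(E, ℝ) | ∫ x, f x ∂m - ∫ x, f x ∂n ≤ T} :=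
    isClosed_le
      ((continuous_integral_continuousMap m).sub (continuous_integral_continuousMap n))
      continuous_const
  exact closure_minimal hT hclosed (hdense hf)

variable {S : Type*} [MeasurableSpace S] [StandardBorelSpace S] {m n : Measure S}
  [IsProbabilityMeasure m] [IsProbabilityMeasure n]

theorem KR_le_of_prefixDist_comp {c : S → S → ℝ} {v : ℕ → E → ℝ} (hv : ∀ i, Continuous (v i))
    {U : S → E} (hU : Measurable U)
    (hc : ∀ x y, ENNReal.ofReal (c x y) = ⨆ N, ENNReal.ofReal (prefixDist v N (U x) (U y)))
    {T : ℝ} (h : ∀ N, ∀ w ∈ LipC (prefixDist v N), ∫ x, w (U x) ∂m - ∫ x, w (U x) ∂n ≤ T) :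
    KR c m n ≤ ENNReal.ofReal T := by
  have := Measure.isProbabilityMeasure_map (μ := m) hU.aemeasurable
  have := Measure.isProbabilityMeasure_map (μ := n) hU.aemeasurable
  have hd : ∀ N, Continuous fun p : E × E => prefixDist v N p.1 p.2 := continuous_prefixDist hv
  have hd0 : ∀ N (p : E × E), 0 ≤ prefixDist v N p.1 p.2 := fun _ _ => dist_nonneg
  obtain ⟨γ, hγ, hγT⟩ := exists_coupling_prefixDist (m := m.map U) (n := n.map U) hv
    fun N w hw => by
      rw [integral_map hU.aemeasurable hw.1.aestronglyMeasurable,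
        integral_map hU.aemeasurable hw.1.aestronglyMeasurable]
      exact h N w hw
  obtain ⟨π, hπ, hπγ⟩ := Couplings.exists_map_eq hU hγ
  have := hγ.1
  calc KR c m n ≤ ∫⁻ p, ENNReal.ofReal (c p.1 p.2) ∂π := iInf₂_le π hπ
    _ = ∫⁻ p, ⨆ N, ENNReal.ofReal (prefixDist v N p.1 p.2) ∂γ := by
      rw [← hπγ, lintegral_map (.iSup fun N => (hd N).measurable.ennreal_ofReal)
        (hU.prodMap hU)]
      simp only [hc, Prod.map_fst, Prod.map_snd]
    _ = ⨆ N, ∫⁻ p, ENNReal.ofReal (prefixDist v N p.1 p.2) ∂γ :=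
      lintegral_iSup (fun N => (hd N).measurable.ennreal_ofReal)
        fun _ _ hN p => ENNReal.ofReal_le_ofReal (prefixDist_mono v p.1 p.2 hN)
    _ ≤ ENNReal.ofReal T := iSup_le fun N => by
      have hint : Integrable (fun p => prefixDist v N p.1 p.2) γ :=
        integrable_continuousMap ⟨_, hd N⟩
      rw [← ofReal_integral_eq_lintegral_ofReal hint (.of_forall (hd0 N))]
      exact ENNReal.ofReal_le_ofReal (hγT N)

end CountableDuality

theorem StarCond.exists_countable_KR_le {S : Type*} [TopologicalSpace S] [PolishSpace S]
    [MeasurableSpace S] [BorelSpace S] {c : S → S → ℝ} (hc : StarCond c) :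
    ∃ D ⊆ LipC c, D.Countable ∧ ∀ (m n : Measure S) [IsProbabilityMeasure m]
      [IsProbabilityMeasure n], KR c m n ≤ ⨆ f ∈ D, ENNReal.ofReal (∫ x, f x ∂m - ∫ x, f x ∂n) := by
  obtain ⟨u, hu, hcu⟩ := hc.exists_seq_ofReal_eq_iSup_prefixDist
  choose M hM using fun i => (hu i).2.1
  let E := ∀ i, Icc (-M i) (M i)
  let U : S → E := fun x i => ⟨u i x, abs_le.1 (hM i x)⟩
  let v : ℕ → E → ℝ := fun i z => z i
  have hU : Continuous U := continuous_pi fun i => (hu i).1.subtype_mk _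
  have hv : ∀ i, Continuous (v i) := fun i => by fun_prop
  obtain ⟨D, hDsub, hD, hDnorm⟩ := exists_countable_subset_integral_sub_le
    {w : C(E, ℝ) | ∃ N, ⇑w ∈ LipC (prefixDist v N)}
  refine ⟨(fun w x => w (U x)) '' D, ?_, hD.image _, fun m n _ _ => ?_⟩
  · rintro _ ⟨w, hw, rfl⟩
    obtain ⟨N, hwc, ⟨B, hB⟩, hwN⟩ := hDsub hw
    refine ⟨hwc.comp hU, ⟨B, fun x => hB (U x)⟩, fun x y => (hwN _ _).trans ?_⟩
    exact (prefixDist_le_iff (hc.nonneg x y)).2 fun i _ => (hu i).2.2 x y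
  · set V := ⨆ f ∈ (fun (w : C(E, ℝ)) x => w (U x)) '' D,
      ENNReal.ofReal (∫ x, f x ∂m - ∫ x, f x ∂n)
    rcases eq_or_ne V ⊤ with hVtop | hVtop
    · exact hVtop ▸ le_top
    have := Measure.isProbabilityMeasure_map (μ := m) hU.measurable.aemeasurable
    have := Measure.isProbabilityMeasure_map (μ := n) hU.measurable.aemeasurable
    have hmap : ∀ (ρ : Measure S) (w : C(E, ℝ)), ∫ z, w z ∂ρ.map U = ∫ x, w (U x) ∂ρ := fun ρ w =>
      integral_map hU.measurable.aemeasurable w.continuous.aestronglyMeasurable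
    have hbound := hDnorm (m.map U) (n.map U) V.toReal fun w hw => by
      rw [hmap, hmap, ← ENNReal.ofReal_le_iff_le_toReal hVtop]
      exact le_iSup₂_of_le _ (mem_image_of_mem _ hw) le_rfl
    rw [← ENNReal.ofReal_toReal hVtop]
    refine KR_le_of_prefixDist_comp hv hU.measurable hcu fun N w hw => ?_
    have := hbound ⟨w, hw.1⟩ ⟨N, hw⟩
    rwa [hmap, hmap] at this

section Parametrized

variable {Ω S : Type*} [MeasurableSpace Ω] [MeasurableSpace S]

theorem paramLipDist_le_paramKR [TopologicalSpace S] {c : S → S → ℝ} {μ ν : Measure (Ω × S)} :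
    paramLipDist c μ ν ≤ paramKR c μ ν := by
  refine iSup₂_le fun f ⟨hf, hfc⟩ => le_iInf₂ fun π ⟨_, hμ, hν⟩ => ?_
  rcases eq_or_ne (∫⁻ p, ENNReal.ofReal (c p.2.1 p.2.2) ∂π) ⊤ with htop | hfin
  · exact htop ▸ le_top
  let F : Ω × S × S → ℝ := fun p => f (p.1, p.2.1)
  let G : Ω × S × S → ℝ := fun p => f (p.1, p.2.2)
  have hF : Measurable F := by fun_prop
  have hG : Measurable G := by fun_prop
  have hμf : ∫ p, f p ∂μ = ∫ p, F p ∂π := by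
    rw [← hμ, integral_map (by fun_prop) hf.aestronglyMeasurable]
  have hνf : ∫ p, f p ∂ν = ∫ p, G p ∂π := by
    rw [← hν, integral_map (by fun_prop) hf.aestronglyMeasurable]
  have hbound : ∫⁻ p, ‖(F - G) p‖ₑ ∂π ≤ ∫⁻ p, ENNReal.ofReal (c p.2.1 p.2.2) ∂π :=
    lintegral_mono fun p => by
      rw [Real.enorm_eq_ofReal_abs]
      exact ENNReal.ofReal_le_ofReal ((hfc p.1).2.2 _ _)
  have hFG : Integrable (F - G) π :=
    ⟨(hF.sub hG).aestronglyMeasurable, hbound.trans_lt hfin.lt_top⟩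
  rw [hμf, hνf]
  by_cases hFint : Integrable F π
  · have hGint : Integrable G π := by simpa using hFint.sub hFG
    calc ENNReal.ofReal (∫ p, F p ∂π - ∫ p, G p ∂π) = ENNReal.ofReal (∫ p, (F - G) p ∂π) := by
          rw [integral_sub' hFint hGint]
      _ ≤ ‖∫ p, (F - G) p ∂π‖ₑ := Real.ofReal_le_enorm _
      _ ≤ ∫⁻ p, ‖(F - G) p‖ₑ ∂π := enorm_integral_le_lintegral_enorm _
      _ ≤ _ := hbound
  · have hGint : ¬Integrable G π := fun h => hFint (by simpa using hFG.add h)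
    simp [integral_undef hFint, integral_undef hGint]

theorem exists_measurable_argmax {F : ℕ → Ω → ℝ} (hF : ∀ k, Measurable (F k)) (N : ℕ) :
    ∃ k : Ω → ℕ, Measurable k ∧ ∀ ω, k ω ≤ N ∧ ∀ j ≤ N, F j ω ≤ F (k ω) ω := by
  induction N with
  | zero => exact ⟨0, measurable_const, fun ω => ⟨le_rfl, fun j hj => by simp_all⟩⟩
  | succ N ih =>
    obtain ⟨k, hk, hmax⟩ := ih
    have hFk : Measurable fun ω => F (k ω) ω :=
      (measurable_from_prod_countable_right hF : Measurable fun p : ℕ × Ω => F p.1 p.2).comp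
        (hk.prodMk measurable_id)
    classical
    refine ⟨fun ω => if F (k ω) ω < F (N + 1) ω then N + 1 else k ω,
      .ite (measurableSet_lt hFk (hF _)) measurable_const hk, fun ω => ?_⟩
    obtain ⟨hkN, hj⟩ := hmax ω
    beta_reduce
    split_ifs with h
    · exact ⟨le_rfl, fun j hjN => (Nat.le_succ_iff.1 hjN).elim
        (fun hle => (hj j hle).trans h.le) fun heq => heq ▸ le_rfl⟩
    · exact ⟨hkN.trans N.le_succ, fun j hjN => (Nat.le_succ_iff.1 hjN).elim (hj j)
        fun heq => heq ▸ not_lt.1 h⟩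

theorem IsDisintegration.exists_kernel {P : Measure Ω} [SFinite P] {μ : Measure (Ω × S)}
    {κ : Ω → Measure S} (h : IsDisintegration P μ κ) :
    ∃ K : Kernel Ω S, IsMarkovKernel K ∧ (∀ ω, K ω = κ ω) ∧ μ = P ⊗ₘ K := by
  obtain ⟨hprob, hmeas, hμ⟩ := h
  let K : Kernel Ω S := ⟨κ, Measure.measurable_of_measurable_coe _ hmeas⟩
  have : IsMarkovKernel K := ⟨hprob⟩
  refine ⟨K, this, fun _ => rfl, Measure.ext_of_lintegral _ fun f hf => ?_⟩
  rw [hμ f hf, Measure.lintegral_compProd hf]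
  rfl

variable {P : Measure Ω} [IsFiniteMeasure P] {μ ν : Measure (Ω × S)} {κμ κν : Ω → Measure S}

theorem lintegral_ofReal_le_paramLipDist [TopologicalSpace S] {c : S → S → ℝ}
    (hκμ : IsDisintegration P μ κμ) (hκν : IsDisintegration P ν κν) {f : Ω × S → ℝ}
    (hf : Measurable f) (hfc : ∀ ω, (fun x => f (ω, x)) ∈ LipC c) {M : ℝ} (hM : ∀ p, |f p| ≤ M)
    (hpos : ∀ ω, 0 ≤ ∫ x, f (ω, x) ∂κμ ω - ∫ x, f (ω, x) ∂κν ω) :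
    ∫⁻ ω, ENNReal.ofReal (∫ x, f (ω, x) ∂κμ ω - ∫ x, f (ω, x) ∂κν ω) ∂P
      ≤ paramLipDist c μ ν := by
  obtain ⟨K, _, hK, rfl⟩ := hκμ.exists_kernel
  obtain ⟨K', _, hK', rfl⟩ := hκν.exists_kernel
  simp only [← hK, ← hK'] at hpos ⊢
  have hint : ∀ (K : Kernel Ω S) [IsMarkovKernel K], Integrable f (P ⊗ₘ K) := fun K _ =>
    .of_bound hf.aestronglyMeasurable M (.of_forall hM)
  have hint' : ∀ (K : Kernel Ω S) [IsMarkovKernel K],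
      Integrable (fun ω => ∫ x, f (ω, x) ∂K ω) P := fun K _ => by
    simpa using Integrable.integral_compProd (hint K)
  have hgap : Integrable (fun ω => ∫ x, f (ω, x) ∂K ω - ∫ x, f (ω, x) ∂K' ω) P :=
    (hint' K).sub (hint' K')
  rw [← ofReal_integral_eq_lintegral_ofReal hgap (.of_forall hpos),
    integral_sub (hint' K) (hint' K'), ← Measure.integral_compProd (hint K),
    ← Measure.integral_compProd (hint K')]
  exact le_iSup₂_of_le f ⟨hf, hfc⟩ le_rfl

theorem lintegral_iSup_ofReal_le_paramLipDist [TopologicalSpace S] [OpensMeasurableSpace S]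
    {c : S → S → ℝ} (hκμ : IsDisintegration P μ κμ) (hκν : IsDisintegration P ν κν)
    {u : ℕ → S → ℝ} (hu : ∀ i, u i ∈ LipC c) (hu0 : u 0 = 0) :
    ∫⁻ ω, ⨆ i, ENNReal.ofReal (∫ x, u i x ∂κμ ω - ∫ x, u i x ∂κν ω) ∂P
      ≤ paramLipDist c μ ν := by
  let gap : ℕ → Ω → ℝ := fun i ω => ∫ x, u i x ∂κμ ω - ∫ x, u i x ∂κν ω
  have hum : ∀ i, Measurable (u i) := fun i => (hu i).1.measurable
  have hgap : ∀ i, Measurable (gap i) := fun i => by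
    obtain ⟨K, _, hK, -⟩ := hκμ.exists_kernel
    obtain ⟨K', _, hK', -⟩ := hκν.exists_kernel
    simp only [gap, ← hK, ← hK']
    exact (hum i).stronglyMeasurable.integral_kernel.measurable.sub
      (hum i).stronglyMeasurable.integral_kernel.measurable
  choose M hM using fun i => (hu i).2.1
  choose k hk hmax using fun N => exists_measurable_argmax hgap N
  have hle : ∀ {i N}, i ≤ N → ∀ ω, gap i ω ≤ gap (k N ω) ω := fun hi ω => (hmax _ ω).2 _ hi
  have hgapk : ∀ N, Measurable fun ω => gap (k N ω) ω := fun N =>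
    (measurable_from_prod_countable_right hgap : Measurable fun p : ℕ × Ω => gap p.1 p.2).comp
      ((hk N).prodMk measurable_id)
  have hf : ∀ N, Measurable fun p : Ω × S => u (k N p.1) p.2 := fun N =>
    (measurable_from_prod_countable_right hum : Measurable fun p : ℕ × S => u p.1 p.2).comp
      (((hk N).comp measurable_fst).prodMk measurable_snd)
  calc ∫⁻ ω, ⨆ i, ENNReal.ofReal (gap i ω) ∂P
      ≤ ∫⁻ ω, ⨆ N, ENNReal.ofReal (gap (k N ω) ω) ∂P :=
        lintegral_mono fun ω => iSup_mono fun i => ENNReal.ofReal_le_ofReal (hle le_rfl ω)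
    _ = ⨆ N, ∫⁻ ω, ENNReal.ofReal (gap (k N ω) ω) ∂P :=
        lintegral_iSup (fun N => (hgapk N).ennreal_ofReal) fun _ _ hN ω =>
          ENNReal.ofReal_le_ofReal (hle ((hmax _ ω).1.trans hN) ω)
    _ ≤ paramLipDist c μ ν := iSup_le fun N =>
        lintegral_ofReal_le_paramLipDist hκμ hκν (hf N) (fun ω => hu (k N ω))
          (fun p => (hM _ _).trans (le_partialSups_of_le M (hmax N p.1).1))
          fun ω => by simpa [gap, hu0] using hle N.zero_le ω

end Parametrized

section MeasurableSelection

variable {Ω : Type*} [mΩ : MeasurableSpace Ω] {P : Measure Ω}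

theorem aemeasurable_of_measurable_univCompletion [IsFiniteMeasure P] {f : Ω → ℝ≥0∞}
    (hf : Measurable[univCompletion mΩ] f) : AEMeasurable f P := by
  have hle : univCompletion mΩ ≤ muCompletion mΩ P := iInf₂_le P ‹IsFiniteMeasure P›
  have : NullMeasurable f P := fun s hs => hle _ (hf hs)
  exact this.aemeasurable

theorem exists_kernel_ae_eq {T : Type*} [MeasurableSpace T] [MeasurableSpace.CountablyGenerated T]
    {κ : Ω → Measure T} [∀ ω, IsProbabilityMeasure (κ ω)]
    (hκ : ∀ B, MeasurableSet B → AEMeasurable (fun ω => κ ω B) P) :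
    ∃ K : Kernel Ω T, IsFiniteKernel K ∧ ∀ᵐ ω ∂P, K ω = κ ω := by
  let 𝒟 := generateSetAlgebra (MeasurableSpace.countableGeneratingSet T)
  have h𝒟alg : IsSetAlgebra 𝒟 := isSetAlgebra_generateSetAlgebra
  have h𝒟gen : ‹MeasurableSpace T› = .generateFrom 𝒟 := by
    rw [generateFrom_generateSetAlgebra_eq, MeasurableSpace.generateFrom_countableGeneratingSet]
  have h𝒟 : ∀ B ∈ 𝒟, AEMeasurable (fun ω => κ ω B) P := fun B hB =>
    hκ B (h𝒟gen ▸ MeasurableSpace.measurableSet_generateFrom hB)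
  have hae : ∀ᵐ ω ∂P, ∀ B (hB : B ∈ 𝒟), κ ω B = (h𝒟 B hB).mk _ ω :=
    (ae_ball_iff (countable_generateSetAlgebra MeasurableSpace.countable_countableGeneratingSet)).2
      fun B hB => (h𝒟 B hB).ae_eq_mk
  obtain ⟨N, hNsub, hN, hN0⟩ := exists_measurable_superset_of_null (ae_iff.1 hae)
  classical
  let κ' : Ω → Measure T := fun ω => if ω ∈ N then 0 else κ ω
  have hκ' : ∀ ω, IsFiniteMeasure (κ' ω) := fun ω => by
    dsimp only [κ']
    split_ifs <;> infer_instance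
  have hmeas : ∀ B ∈ 𝒟, Measurable fun ω => κ' ω B := fun B hB => by
    have heq : (fun ω => κ' ω B) = fun ω => if ω ∈ N then 0 else (h𝒟 B hB).mk _ ω := by
      funext ω
      by_cases hω : ω ∈ N
      · simp [κ', hω]
      · simpa [κ', hω] using not_not.1 (fun h => hω (hNsub h)) B hB
    rw [heq]
    exact .ite hN measurable_const (h𝒟 B hB).measurable_mk
  refine ⟨⟨κ', .measure_of_isPiSystem h𝒟gen (fun A hA B hB _ => h𝒟alg.inter_mem hA hB) hmeas
    (hmeas _ h𝒟alg.univ_mem)⟩, ⟨1, one_lt_top, fun ω => ?_⟩, ?_⟩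
  · change κ' ω univ ≤ 1
    dsimp only [κ']
    split_ifs <;> simp
  · filter_upwards [measure_eq_zero_iff_ae_notMem.1 hN0] with ω hω
    exact if_neg hω

end MeasurableSelection

section Gluing

variable {Ω S : Type*} [MeasurableSpace Ω] [MeasurableSpace S] {P : Measure Ω} [IsFiniteMeasure P]

theorem eq_compProd_of_rectangles {K : Kernel Ω (S × S)} [IsFiniteKernel K]
    {lam : Measure (Ω × S × S)}
    (h : ∀ A : Set Ω, MeasurableSet A → ∀ B C : Set S, MeasurableSet B → MeasurableSet C →
      lam (A ×ˢ B ×ˢ C) = ∫⁻ ω in A, K ω (B ×ˢ C) ∂P) : lam = P ⊗ₘ K :=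
  (Measure.ext_prod₃ fun {A B C} hA hB hC => by
    rw [h A hA B C hB hC, Measure.compProd_apply_prod hA (hB.prod hC)]).symm

theorem IsDisintegration.map_compProd_eq {T : Type*} [MeasurableSpace T] {μ : Measure (Ω × S)}
    {κ : Ω → Measure S} (hκ : IsDisintegration P μ κ) {K : Kernel Ω T} [IsFiniteKernel K]
    {g : T → S} (hg : Measurable g) (h : ∀ᵐ ω ∂P, (K ω).map g = κ ω) :
    (P ⊗ₘ K).map (Prod.map id g) = μ := by
  obtain ⟨K', _, hK', rfl⟩ := hκ.exists_kernel
  rw [← Measure.compProd_map hg]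
  refine Measure.compProd_congr ?_
  filter_upwards [h] with ω hω
  rw [Kernel.map_apply _ hg, hω, hK']

theorem compProd_mem_paramCouplings [IsProbabilityMeasure P] {μ ν : Measure (Ω × S)}
    {κμ κν : Ω → Measure S}
    (hκμ : IsDisintegration P μ κμ) (hκν : IsDisintegration P ν κν) {K : Kernel Ω (S × S)}
    [IsFiniteKernel K] (hK : ∀ᵐ ω ∂P, K ω ∈ Couplings (κμ ω) (κν ω)) :
    P ⊗ₘ K ∈ ParamCouplings μ ν := by
  refine ⟨⟨?_⟩, hκμ.map_compProd_eq measurable_fst (hK.mono fun _ h => h.2.1),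
    hκν.map_compProd_eq measurable_snd (hK.mono fun _ h => h.2.2)⟩
  have hone : ∀ᵐ ω ∂P, K ω univ = 1 := hK.mono fun _ h => h.1.measure_univ
  rw [← univ_prod_univ, Measure.compProd_apply_prod .univ .univ, setLIntegral_univ,
    lintegral_congr_ae hone, lintegral_one, measure_univ]

end Gluing

theorem StarCond.lintegral_KR_le_paramLipDist {S : Type*} [TopologicalSpace S] [PolishSpace S]
    [MeasurableSpace S] [BorelSpace S] {Ω : Type*} [MeasurableSpace Ω] {P : Measure Ω}
    [IsFiniteMeasure P] {c : S → S → ℝ} (hc : StarCond c) {μ ν : Measure (Ω × S)}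
    {κμ κν : Ω → Measure S}
    (hκμ : IsDisintegration P μ κμ) (hκν : IsDisintegration P ν κν) :
    ∫⁻ ω, KR c (κμ ω) (κν ω) ∂P ≤ paramLipDist c μ ν := by
  obtain ⟨D, hDsub, hD, hKR⟩ := hc.exists_countable_KR_le
  obtain ⟨u, hu⟩ := (hD.insert 0).exists_eq_range (insert_nonempty 0 D)
  have hu' : ∀ i, u i ∈ LipC c := fun i =>
    insert_subset (zero_mem_lipC hc.nonneg) hDsub (hu ▸ mem_range_self i)
  let v : ℕ → S → ℝ := fun i => i.casesOn 0 u
  have hv : ∀ i, v i ∈ LipC c := fun i => i.casesOn (zero_mem_lipC hc.nonneg) hu'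
  refine le_trans (lintegral_mono fun ω => ?_)
    (lintegral_iSup_ofReal_le_paramLipDist hκμ hκν hv rfl)
  have := hκμ.1 ω
  have := hκν.1 ω
  refine (hKR _ _).trans (iSup₂_le fun f hf => ?_)
  obtain ⟨i, rfl⟩ : f ∈ range u := hu ▸ mem_insert_of_mem 0 hf
  exact le_iSup_of_le (i + 1) le_rfl

theorem parametrized_KR_duality_general
    {S : Type*} [TopologicalSpace S] [PolishSpace S] [MeasurableSpace S] [BorelSpace S]
    {Ω : Type*} [MeasurableSpace Ω] (P : Measure Ω) [IsProbabilityMeasure P]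
    (c : S → S → ℝ) (hstar : StarCond c) (μ ν : Measure (Ω × S)) (κμ κν : Ω → Measure S)
    (hκμ : IsDisintegration P μ κμ) (hκν : IsDisintegration P ν κν)
    (lamK : Ω → Measure (S × S))
    (hlamK_meas : ∀ B : Set (S × S), MeasurableSet B → AEMeasurable (fun ω => lamK ω B) P)
    (hlamK_marg : ∀ ω, lamK ω ∈ Couplings (κμ ω) (κν ω))
    (hlamK_opt : ∀ ω, ∫⁻ p, ENNReal.ofReal (c p.1 p.2) ∂(lamK ω) = KR c (κμ ω) (κν ω))
    (lam : Measure (Ω × S × S))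
    (hlam : ∀ A : Set Ω, MeasurableSet A → ∀ B C : Set S, MeasurableSet B → MeasurableSet C →
      lam (A ×ˢ B ×ˢ C) = ∫⁻ ω in A, lamK ω (B ×ˢ C) ∂P) :
    paramKR c μ ν = ∫⁻ p : Ω × S × S, ENNReal.ofReal (c p.2.1 p.2.2) ∂lam ∧
    paramKR c μ ν = paramLipDist c μ ν ∧
    lam ∈ ParamCouplings μ ν := by
  have := fun ω => (hlamK_marg ω).1
  obtain ⟨K, _, hK⟩ := exists_kernel_ae_eq hlamK_meas
  obtain rfl : lam = P ⊗ₘ K := eq_compProd_of_rectangles fun A hA B C hB hC => by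
    rw [hlam A hA B C hB hC]
    exact lintegral_congr_ae (ae_restrict_of_ae (hK.mono fun ω hω => by simp only [hω]))
  have hmem : P ⊗ₘ K ∈ ParamCouplings μ ν :=
    compProd_mem_paramCouplings hκμ hκν (hK.mono fun ω hω => hω ▸ hlamK_marg ω)
  have hcost : ∫⁻ p, ENNReal.ofReal (c p.2.1 p.2.2) ∂(P ⊗ₘ K) = ∫⁻ ω, KR c (κμ ω) (κν ω) ∂P := by
    have hc : Measurable fun p : Ω × S × S => ENNReal.ofReal (c p.2.1 p.2.2) :=
      hstar.measurable_ofReal.comp measurable_snd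
    rw [Measure.lintegral_compProd hc]
    exact lintegral_congr_ae (hK.mono fun ω hω => by simp only [hω, hlamK_opt])
  have hprimal : paramKR c μ ν ≤ ∫⁻ p, ENNReal.ofReal (c p.2.1 p.2.2) ∂(P ⊗ₘ K) := iInf₂_le _ hmem
  have hdual : ∫⁻ p, ENNReal.ofReal (c p.2.1 p.2.2) ∂(P ⊗ₘ K) ≤ paramLipDist c μ ν :=
    hcost.trans_le (hstar.lintegral_KR_le_paramLipDist hκμ hκν)
  have hweak : paramLipDist c μ ν ≤ paramKR c μ ν := paramLipDist_le_paramKR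
  exact ⟨hprimal.antisymm (hdual.trans hweak), (hprimal.trans hdual).antisymm hweak, hmem⟩

/-- **Point 2 of the parametrized Kantorovich–Rubinštein theorem**: given an
`𝒜*`-measurable selection `ω ↦ λ_ω` of optimal couplings of the disintegrations, the
measure `λ(A×B×C) = ∫_A λ_ω(B×C) dP` belongs to `D^par(μ,ν)`, attains the infimum
defining `KR^par_c(μ,ν)`, and `KR^par_c(μ,ν) = ∫ c dλ = ℓ^par_c(μ,ν)`. -/
theorem parametrized_KR_duality
    {S : Type*} [TopologicalSpace S] [PolishSpace S] [MeasurableSpace S] [BorelSpace S]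
    {Ω : Type*} [mΩ : MeasurableSpace Ω] (P : Measure Ω) [IsProbabilityMeasure P]
    (c : S → S → ℝ) (hc0 : ∀ x y, 0 ≤ c x y) (hstar : StarCond c)
    (μ ν : Measure (Ω × S)) [IsProbabilityMeasure μ] [IsProbabilityMeasure ν]
    (hμP : μ.map Prod.fst = P) (hνP : ν.map Prod.fst = P)
    (x₀ : S)
    (hμint : ∫⁻ p : Ω × S, ENNReal.ofReal (c p.2 x₀) ∂μ < ⊤)
    (hνint : ∫⁻ p : Ω × S, ENNReal.ofReal (c p.2 x₀) ∂ν < ⊤)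
    (κμ κν : Ω → Measure S)
    (hκμ : IsDisintegration P μ κμ) (hκν : IsDisintegration P ν κν)
    (lamK : Ω → Measure (S × S))
    (hlamK_prob : ∀ ω, IsProbabilityMeasure (lamK ω))
    (hlamK_meas : ∀ B : Set (S × S), MeasurableSet B →
      @Measurable Ω ℝ≥0∞ (univCompletion mΩ) _ (fun ω => lamK ω B))
    (hlamK_marg : ∀ ω, lamK ω ∈ Couplings (κμ ω) (κν ω))
    (hlamK_opt : ∀ ω, ∫⁻ p, ENNReal.ofReal (c p.1 p.2) ∂(lamK ω) = KR c (κμ ω) (κν ω))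
    (lam : Measure (Ω × S × S)) [IsProbabilityMeasure lam]
    (hlam : ∀ A : Set Ω, MeasurableSet A → ∀ B C : Set S, MeasurableSet B → MeasurableSet C →
      lam (A ×ˢ B ×ˢ C) = ∫⁻ ω in A, lamK ω (B ×ˢ C) ∂P) :
    paramKR c μ ν = ∫⁻ p : Ω × S × S, ENNReal.ofReal (c p.2.1 p.2.2) ∂lam ∧
    paramKR c μ ν = paramLipDist c μ ν ∧
    lam ∈ ParamCouplings μ ν :=
  parametrized_KR_duality_general P c hstar μ ν κμ κν hκμ hκν lamK
    (fun B hB => aemeasurable_of_measurable_univCompletion (hlamK_meas B hB))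
    hlamK_marg hlamK_opt lam hlam

end
end

section
/- Let S be a Polish space and c : S × S → [0,∞] a lower semicontinuous map. For Borel probability measures μ, ν on S let ℓ(μ,ν) := inf_{π ∈ D(μ,ν)} ∫_{S×S} c(x,y) dπ(x,y) ∈ [0,∞], where D(μ,ν) is the set of couplings of μ and ν. Then the function ℓ : P(S) × P(S) → [0,∞] is measurable with respect to the universal completion of the Borel σ-algebra of P(S) × P(S), where P(S) carries the topology of weak convergence. -/
open MeasureTheory ProbabilityTheory ENNReal Set

noncomputable section

/-!
Lower semicontinuity of `c` passes to the functional `π ↦ ∫ c dπ`: integrate the portmanteau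
inequality for the open sets `{c > t}` over `t > 0` and apply Fatou's lemma. By Prokhorov's theorem
the map sending a plan to its pair of margins is proper, hence closed, and the infimum of a lower
semicontinuous function over the fibres of a closed map is lower semicontinuous. So the optimal
cost is lower semicontinuous, in particular Borel measurable.
-/

section Semicontinuity

open Filter Topology TopologicalSpace

lemma volume_restrict_Ioi_ofReal_lt (a : ℝ≥0∞) :
    volume.restrict (Ioi 0) {t : ℝ | ENNReal.ofReal t < a} = a := by
  have hmeas : MeasurableSet {t : ℝ | ENNReal.ofReal t < a} :=
    measurableSet_lt ENNReal.measurable_ofReal measurable_const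
  rw [Measure.restrict_apply hmeas]
  induction a using ENNReal.recTopCoe with
  | top => simp
  | coe r =>
    have : {t : ℝ | ENNReal.ofReal t < r} ∩ Ioi 0 = Ioo 0 (r : ℝ) := by
      ext t
      simp only [mem_inter_iff, mem_ofPred_eq, mem_Ioi, mem_Ioo, and_comm (b := 0 < t)]
      refine and_congr_right fun ht => ?_
      rw [ENNReal.ofReal_lt_iff_lt_toReal ht.le ENNReal.coe_ne_top, ENNReal.coe_toReal]
    simp [this]

lemma lintegral_eq_lintegral_measure_ofReal_lt {X : Type*} [MeasurableSpace X]
    (μ : Measure X) [SFinite μ] {f : X → ℝ≥0∞} (hf : Measurable f) :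
    ∫⁻ x, f x ∂μ = ∫⁻ t in Ioi (0 : ℝ), μ {x | ENNReal.ofReal t < f x} := by
  have hmeas : MeasurableSet {z : X × ℝ | ENNReal.ofReal z.2 < f z.1} :=
    measurableSet_lt (ENNReal.measurable_ofReal.comp measurable_snd) (hf.comp measurable_fst)
  calc ∫⁻ x, f x ∂μ
      = ∫⁻ x, volume.restrict (Ioi 0) {t : ℝ | ENNReal.ofReal t < f x} ∂μ := by
        simp only [volume_restrict_Ioi_ofReal_lt]
    _ = μ.prod (volume.restrict (Ioi 0)) {z : X × ℝ | ENNReal.ofReal z.2 < f z.1} :=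
        (Measure.prod_apply hmeas).symm
    _ = ∫⁻ t in Ioi (0 : ℝ), μ {x | ENNReal.ofReal t < f x} := Measure.prod_apply_symm hmeas

lemma lowerSemicontinuous_lintegral {X : Type*} [TopologicalSpace X] [PseudoMetrizableSpace X]
    [SeparableSpace X] [MeasurableSpace X] [OpensMeasurableSpace X] {f : X → ℝ≥0∞}
    (hf : LowerSemicontinuous f) :
    LowerSemicontinuous fun μ : ProbabilityMeasure X => ∫⁻ x, f x ∂(μ : Measure X) := by
  rw [lowerSemicontinuous_iff_le_liminf]
  intro μ
  simp only [lintegral_eq_lintegral_measure_ofReal_lt _ hf.measurable]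
  calc ∫⁻ t in Ioi (0 : ℝ), (μ : Measure X) {x | ENNReal.ofReal t < f x}
      ≤ ∫⁻ t in Ioi (0 : ℝ), liminf (fun ν : ProbabilityMeasure X =>
          (ν : Measure X) {x | ENNReal.ofReal t < f x}) (𝓝 μ) :=
        lintegral_mono fun t =>
          ProbabilityMeasure.le_liminf_measure_open_of_tendsto tendsto_id (hf.isOpen_preimage _)
    _ ≤ liminf (fun ν : ProbabilityMeasure X =>
          ∫⁻ t in Ioi (0 : ℝ), (ν : Measure X) {x | ENNReal.ofReal t < f x}) (𝓝 μ) :=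
        lintegral_liminf_le fun ν => Antitone.measurable fun s t hst =>
          measure_mono fun x hx => (ENNReal.ofReal_le_ofReal hst).trans_lt hx

lemma lowerSemicontinuous_iInf_fiber {A B γ : Type*} [TopologicalSpace A]
    [TopologicalSpace B] [CompleteLinearOrder γ] [DenselyOrdered γ] {p : A → B} {f : A → γ}
    (hp : IsClosedMap p) (hf : LowerSemicontinuous f) :
    LowerSemicontinuous fun b => ⨅ a ∈ p ⁻¹' {b}, f a := by
  intro b y hy
  obtain ⟨z, hyz, hz⟩ := exists_between hy
  have hopen : IsOpen (kernImage p (f ⁻¹' Ioi z)) :=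
    isClosedMap_iff_kernImage.1 hp (hf.isOpen_preimage z)
  have hb : b ∈ kernImage p (f ⁻¹' Ioi z) := fun a ha => hz.trans_le (iInf₂_le a ha)
  filter_upwards [hopen.mem_nhds hb] with b' hb'
  exact hyz.trans_le (le_iInf₂ fun a ha => (hb' ha).le)

end Semicontinuity

section Margins

variable {X Y : Type*} [MeasurableSpace X] [MeasurableSpace Y]

/-- The pair of margins of a transport plan; the couplings of `μ` and `ν` are its fibre
over `(μ, ν)`. -/
def margins (π : ProbabilityMeasure (X × Y)) : ProbabilityMeasure X × ProbabilityMeasure Y :=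
  (π.map measurable_fst.aemeasurable, π.map measurable_snd.aemeasurable)

/-- The optimal transport cost `ℓ(μ, ν)` of a pair `p = (μ, ν)`, for margins on possibly
different spaces. -/
def optimalCost (c : X × Y → ℝ≥0∞) (p : ProbabilityMeasure X × ProbabilityMeasure Y) : ℝ≥0∞ :=
  ⨅ π ∈ margins ⁻¹' {p}, ∫⁻ q, c q ∂(π : Measure (X × Y))

lemma iInf_couplings_eq_optimalCost (c : X × X → ℝ≥0∞)
    (p : ProbabilityMeasure X × ProbabilityMeasure X) :
    ⨅ π ∈ Couplings (p.1 : Measure X) (p.2 : Measure X), ∫⁻ q, c q ∂π = optimalCost c p := by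
  apply le_antisymm
  · refine le_iInf₂ fun π hπ => ?_
    obtain rfl : margins π = p := hπ
    exact iInf₂_le (π : Measure (X × X)) ⟨π.2, rfl, rfl⟩
  · refine le_iInf₂ fun π ⟨hprob, hfst, hsnd⟩ => ?_
    exact iInf₂_le (⟨π, hprob⟩ : ProbabilityMeasure (X × X))
      (Prod.ext (Subtype.ext hfst) (Subtype.ext hsnd))

variable [TopologicalSpace X] [TopologicalSpace Y]

lemma continuous_margins [OpensMeasurableSpace (X × Y)] [BorelSpace X] [BorelSpace Y] :
    Continuous (margins : ProbabilityMeasure (X × Y) → _) :=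
  (ProbabilityMeasure.continuous_map continuous_fst).prodMk
    (ProbabilityMeasure.continuous_map continuous_snd)

lemma isTightMeasureSet_of_isCompact [PolishSpace X] [BorelSpace X]
    {K : Set (ProbabilityMeasure X)} (hK : IsCompact K) :
    IsTightMeasureSet {((μ : ProbabilityMeasure X) : Measure X) | μ ∈ K} := by
  let := TopologicalSpace.upgradeIsCompletelyMetrizable X
  exact isTightMeasureSet_of_isCompact_closure (hK.isClosed.closure_eq.symm ▸ hK)

variable [PolishSpace X] [BorelSpace X] [PolishSpace Y] [BorelSpace Y]

lemma isTightMeasureSet_preimage_margins {K : Set (ProbabilityMeasure X × ProbabilityMeasure Y)}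
    (hK : IsCompact K) :
    IsTightMeasureSet {((π : ProbabilityMeasure (X × Y)) : Measure (X × Y)) |
      π ∈ margins ⁻¹' K} := by
  refine IsTightMeasureSet.prodMk
    ((isTightMeasureSet_of_isCompact (hK.image continuous_fst)).subset ?_)
    ((isTightMeasureSet_of_isCompact (hK.image continuous_snd)).subset ?_)
  all_goals
    rintro _ ⟨_, ⟨π, hπ, rfl⟩, rfl⟩
    exact ⟨_, mem_image_of_mem _ hπ, rfl⟩

lemma isProperMap_margins :
    IsProperMap (margins : ProbabilityMeasure (X × Y) → _) := by
  refine isProperMap_iff_isCompact_preimage.2 ⟨continuous_margins, fun K hK => ?_⟩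
  rw [← (hK.isClosed.preimage continuous_margins).closure_eq]
  exact isCompact_closure_of_isTightMeasureSet (isTightMeasureSet_preimage_margins hK)

theorem lowerSemicontinuous_optimalCost {c : X × Y → ℝ≥0∞} (hc : LowerSemicontinuous c) :
    LowerSemicontinuous (optimalCost c) :=
  lowerSemicontinuous_iInf_fiber isProperMap_margins.isClosedMap (lowerSemicontinuous_lintegral hc)

theorem measurable_optimal_cost_general {c : X × Y → ℝ≥0∞} (hc : LowerSemicontinuous c) :
    Measurable[borel (ProbabilityMeasure X × ProbabilityMeasure Y)] (optimalCost c) := by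
  borelize (ProbabilityMeasure X × ProbabilityMeasure Y)
  exact (lowerSemicontinuous_optimalCost hc).measurable

end Margins

lemma le_univCompletion {α : Type*} (m : MeasurableSpace α) : m ≤ univCompletion m :=
  le_iInf₂ fun _ _ _ hs => hs.nullMeasurableSet

/-- **Measurability of the optimal cost**: for a lower semicontinuous cost
`c : S × S → [0,∞]`, the map `(μ,ν) ↦ inf_{π ∈ D(μ,ν)} ∫ c dπ` is measurable with
respect to the universal completion of the Borel σ-algebra of `P(S) × P(S)` (for the
topology of weak convergence). -/
theorem measurable_optimal_cost
    {S : Type*} [TopologicalSpace S] [PolishSpace S] [MeasurableSpace S] [BorelSpace S]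
    (c : S × S → ℝ≥0∞) (hc : LowerSemicontinuous c) :
    @Measurable (ProbabilityMeasure S × ProbabilityMeasure S) ℝ≥0∞
      (univCompletion (borel (ProbabilityMeasure S × ProbabilityMeasure S))) _
      (fun p => ⨅ π ∈ Couplings (p.1 : Measure S) (p.2 : Measure S), ∫⁻ q, c q ∂π) := by
  simp only [iInf_couplings_eq_optimalCost]
  exact (measurable_optimal_cost_general hc).mono (le_univCompletion _) le_rfl

end
end
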